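/- Let A and Y be random variables and V = (V_i)_{i ∈ I} a finite family of random variables such that the joint law of (A, (V_i)_{i ∈ I}) is absolutely continuous with respect to the product P_A ⊗ ⨂_{i ∈ I} P_{V_i} of its one-dimensional marginal laws with a density that is positive almost everywhere. Then the outcome Markov boundary is itself an outcome Markov blanket, i.e., R_{Y|A}(V) ∈ 𝔯_{Y|A}(V); equivalently, Y ⊥⊥ V_{I ∖ R_{Y|A}(V)} | (A, V_{R_{Y|A}(V)}), so R_{Y|A}(V) is the minimum element of 𝔯_{Y|A}(V). -/

import Mathlib

/-!
Fix a measurable set `B` and write `F_J` for the σ-algebra generated by `(A, V_J)`. A set `J` is an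
outcome blanket iff for every `B` the conditional probability `P(Y ∈ B | A, V)` has an
`F_J`-measurable version (`isOutBlanket_iff`), i.e. is almost surely a function of `(A, V_J)`.

The positive density makes the law of `(A, V)` equivalent to the product of its marginals. Hence if
`φ₁(A, V_{J₁}) = φ₂(A, V_{J₂})` almost surely, the identity also holds almost everywhere for the
product measure. Resampling independently the coordinates outside `J₂` preserves the product
measure and leaves the right-hand side unchanged, so by Fubini these coordinates can be frozen at a
suitable constant `c`. What results on the left is a function of `(A, V_{J₁ ∩ J₂})` only. Blankets
are therefore closed under binary intersections (`IsOutBlanket.inter`), and since there are finitely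
many of them, their intersection is again a blanket.
-/

open MeasureTheory ProbabilityTheory

/-- `X ⊥⊥ Y | W` under `μ`: conditional independence of the random elements `X` and `Y`
given the σ-algebra generated by the random element `W`. -/
def CondIndepGiven {Ω α β γ : Type*} [mΩ : MeasurableSpace Ω] [StandardBorelSpace Ω]
    [MeasurableSpace α] [MeasurableSpace β] [MeasurableSpace γ]
    (μ : Measure Ω) [IsFiniteMeasure μ]
    (X : Ω → α) (Y : Ω → β) (W : Ω → γ) : Prop :=
  ∃ hle : MeasurableSpace.comap W inferInstance ≤ mΩ,
    CondIndepFun (MeasurableSpace.comap W inferInstance) hle X Y μ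

/-- The subvector `(V_i)_{i ∈ J}` of a family of random variables. -/
def subvec {Ω I : Type*} (V : I → Ω → ℝ) (J : Set I) : Ω → (J → ℝ) :=
  fun ω j => V j ω

/-- The joint law of `(V_i)_{i ∈ I}` is absolutely continuous w.r.t. the product
`⨂_{i ∈ I} P_{V_i}` of its one-dimensional marginal laws, with a density that is positive
almost everywhere. -/
def PositiveFamilyDensity {Ω I : Type*} [MeasurableSpace Ω] [Fintype I]
    (μ : Measure Ω) (V : I → Ω → ℝ) : Prop :=
  μ.map (fun ω i => V i ω) ≪ Measure.pi (fun i => μ.map (V i)) ∧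
    ∀ᵐ x ∂(Measure.pi fun i => μ.map (V i)),
      0 < (μ.map (fun ω i => V i ω)).rnDeriv (Measure.pi fun i => μ.map (V i)) x

/-- The joint law of `(W, (V_i)_{i ∈ I})` is absolutely continuous w.r.t. the product
`P_W ⊗ ⨂_{i ∈ I} P_{V_i}` of its one-dimensional marginal laws, with a density that is
positive almost everywhere. -/
def PositivePairDensity {Ω α I : Type*} [MeasurableSpace Ω] [MeasurableSpace α] [Fintype I]
    (μ : Measure Ω) (W : Ω → α) (V : I → Ω → ℝ) : Prop :=
  μ.map (fun ω => (W ω, fun i => V i ω)) ≪ (μ.map W).prod (Measure.pi fun i => μ.map (V i)) ∧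
    ∀ᵐ x ∂((μ.map W).prod (Measure.pi fun i => μ.map (V i))),
      0 < (μ.map (fun ω => (W ω, fun i => V i ω))).rnDeriv
            ((μ.map W).prod (Measure.pi fun i => μ.map (V i))) x

/-- The joint law of `(W, U, (V_i)_{i ∈ I})` is absolutely continuous w.r.t. the product
`P_W ⊗ P_U ⊗ ⨂_{i ∈ I} P_{V_i}` of its one-dimensional marginal laws, with a density that is
positive almost everywhere. -/
def PositiveTripleDensity {Ω I : Type*} [MeasurableSpace Ω] [Fintype I]
    (μ : Measure Ω) (W U : Ω → ℝ) (V : I → Ω → ℝ) : Prop :=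
  μ.map (fun ω => (W ω, U ω, fun i => V i ω)) ≪
      (μ.map W).prod ((μ.map U).prod (Measure.pi fun i => μ.map (V i))) ∧
    ∀ᵐ x ∂((μ.map W).prod ((μ.map U).prod (Measure.pi fun i => μ.map (V i)))),
      0 < (μ.map (fun ω => (W ω, U ω, fun i => V i ω))).rnDeriv
            ((μ.map W).prod ((μ.map U).prod (Measure.pi fun i => μ.map (V i)))) x

/-- `J ∈ 𝔯_A(V)`: `J` is a treatment Markov blanket of the family `V`,
i.e. `A ⊥⊥ V_{I∖J} | V_J`. -/
def IsTreatBlanket {Ω I : Type*} [MeasurableSpace Ω] [StandardBorelSpace Ω]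
    (μ : Measure Ω) [IsFiniteMeasure μ] (A : Ω → ℝ) (V : I → Ω → ℝ) (J : Set I) : Prop :=
  CondIndepGiven μ A (subvec V (Set.univ \ J)) (subvec V J)

/-- `J ∈ 𝔯_{Y|A}(V)`: `J` is an outcome Markov blanket of the family `V`,
i.e. `Y ⊥⊥ V_{I∖J} | (A, V_J)`. -/
def IsOutBlanket {Ω I : Type*} [MeasurableSpace Ω] [StandardBorelSpace Ω]
    (μ : Measure Ω) [IsFiniteMeasure μ] (A Y : Ω → ℝ) (V : I → Ω → ℝ) (J : Set I) : Prop :=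
  CondIndepGiven μ Y (subvec V (Set.univ \ J)) (fun ω => (A ω, subvec V J ω))

/-- `R_A(V_J)`: the treatment Markov boundary of the subfamily `(V_i)_{i ∈ J}`, i.e. the
intersection of all `J' ⊆ J` such that `A ⊥⊥ V_{J∖J'} | V_{J'}`. -/
def treatBoundary {Ω I : Type*} [MeasurableSpace Ω] [StandardBorelSpace Ω]
    (μ : Measure Ω) [IsFiniteMeasure μ] (A : Ω → ℝ) (V : I → Ω → ℝ) (J : Set I) : Set I :=
  ⋂₀ {J' : Set I | J' ⊆ J ∧ CondIndepGiven μ A (subvec V (J \ J')) (subvec V J')}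

/-- `R_{Y|A}(V_J)`: the outcome Markov boundary of the subfamily `(V_i)_{i ∈ J}`, i.e. the
intersection of all `J' ⊆ J` such that `Y ⊥⊥ V_{J∖J'} | (A, V_{J'})`. -/
def outBoundary {Ω I : Type*} [MeasurableSpace Ω] [StandardBorelSpace Ω]
    (μ : Measure Ω) [IsFiniteMeasure μ] (A Y : Ω → ℝ) (V : I → Ω → ℝ) (J : Set I) : Set I :=
  ⋂₀ {J' : Set I | J' ⊆ J ∧
        CondIndepGiven μ Y (subvec V (J \ J')) (fun ω => (A ω, subvec V J' ω))}

/-- `A` is a binary treatment taking values in `{0, 1}`. -/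
def IsBinary {Ω : Type*} (A : Ω → ℝ) : Prop :=
  ∀ ω, A ω = 0 ∨ A ω = 1

/-- Consistency of the observed outcome `Y` with the potential outcomes `Y₀, Y₁`:
`Y = Y₁` a.s. on `{A = 1}` and `Y = Y₀` a.s. on `{A = 0}`. -/
def Consistency {Ω : Type*} [MeasurableSpace Ω] (μ : Measure Ω) (A Y Y0 Y1 : Ω → ℝ) : Prop :=
  (∀ᵐ ω ∂μ, A ω = 1 → Y ω = Y1 ω) ∧ (∀ᵐ ω ∂μ, A ω = 0 → Y ω = Y0 ω)

/-- The random vector `C` controls for confounding: `Y_a ⊥⊥ A | C` for `a = 0, 1`. -/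
def ControlsConfounding {Ω γ : Type*} [MeasurableSpace Ω] [StandardBorelSpace Ω]
    [MeasurableSpace γ] (μ : Measure Ω) [IsFiniteMeasure μ]
    (A Y0 Y1 : Ω → ℝ) (C : Ω → γ) : Prop :=
  CondIndepGiven μ Y0 A C ∧ CondIndepGiven μ Y1 A C

section Blankets

variable {Ω I : Type*} [MeasurableSpace Ω]

lemma measurable_subvec {V : I → Ω → ℝ} (hV : ∀ i, Measurable (V i)) (J : Set I) :
    Measurable (subvec V J) :=
  measurable_pi_lambda _ fun j => hV j

/-- Splitting the coordinates of `V` along `J` and its complement does not change the generated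
σ-algebra. -/
lemma comap_split (A : Ω → ℝ) (V : I → Ω → ℝ) (J : Set I) :
    MeasurableSpace.comap
        (fun ω => ((A ω, subvec V J ω), subvec V (Set.univ \ J) ω)) inferInstance =
      MeasurableSpace.comap (fun ω => (A ω, fun i => V i ω)) inferInstance := by
  classical
  apply le_antisymm
  · have hφ : Measurable (fun p : ℝ × (I → ℝ) =>
        ((p.1, fun j : J => p.2 j), fun j : (Set.univ \ J : Set I) => p.2 j)) := by fun_prop
    exact (hφ.comp (comap_measurable fun ω => (A ω, fun i => V i ω))).comap_le
  · have hφ : Measurable (fun p : (ℝ × (J → ℝ)) × ((Set.univ \ J : Set I) → ℝ) =>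
        (p.1.1, fun i => if h : i ∈ J then p.1.2 ⟨i, h⟩ else p.2 ⟨i, trivial, h⟩)) := by
      refine Measurable.prodMk (by fun_prop) (measurable_pi_lambda _ fun i => ?_)
      by_cases h : i ∈ J
      · simp only [h, dite_true]; fun_prop
      · simp only [h, dite_false]; fun_prop
    have key := hφ.comp (comap_measurable
      (fun ω => ((A ω, subvec V J ω), subvec V (Set.univ \ J) ω)))
    have heq : (fun p : (ℝ × (J → ℝ)) × ((Set.univ \ J : Set I) → ℝ) =>
        (p.1.1, fun i => if h : i ∈ J then p.1.2 ⟨i, h⟩ else p.2 ⟨i, trivial, h⟩)) ∘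
          (fun ω => ((A ω, subvec V J ω), subvec V (Set.univ \ J) ω)) =
        fun ω => (A ω, fun i => V i ω) := by
      funext ω
      refine Prod.ext rfl (funext fun i => ?_)
      by_cases h : i ∈ J <;> simp [h, subvec]
    rw [heq] at key
    exact key.comap_le

/-- `J` is an outcome blanket iff every conditional probability `P(Y ∈ B | A, V)` has a version
that is measurable with respect to `(A, V_J)`. -/
lemma isOutBlanket_iff [StandardBorelSpace Ω] (μ : Measure Ω) [IsProbabilityMeasure μ]
    {A Y : Ω → ℝ} {V : I → Ω → ℝ} [Fintype I]
    (hA : Measurable A) (hY : Measurable Y) (hV : ∀ i, Measurable (V i)) (J : Set I) :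
    IsOutBlanket μ A Y V J ↔ ∀ B : Set ℝ, MeasurableSet B → ∃ φ : ℝ × (J → ℝ) → ℝ, Measurable φ ∧
      μ⟦Y ⁻¹' B | MeasurableSpace.comap (fun ω => (A ω, fun i => V i ω)) inferInstance⟧ =ᵐ[μ]
        fun ω => φ (A ω, subvec V J ω) := by
  have hW : Measurable (fun ω => (A ω, subvec V J ω)) := hA.prodMk (measurable_subvec hV J)
  have hU : Measurable (subvec V (Set.univ \ J)) := measurable_subvec hV _
  have hX : Measurable (fun ω => (A ω, fun i => V i ω)) := hA.prodMk (measurable_pi_lambda _ hV)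
  constructor
  · rintro ⟨hle, h⟩ B hB
    have h' := (condIndepFun_iff_condDistrib_prod_ae_eq_prodMkRight hY hU hW).1 h.symm
    have h1 := condDistrib_ae_eq_condExp (μ := μ) (hW.prodMk hU) hY hB
    rw [comap_split A V J] at h1
    refine ⟨fun p => (condDistrib Y (fun ω => (A ω, subvec V J ω)) μ p).real B,
      (Kernel.measurable_coe _ hB).ennreal_toReal, ?_⟩
    filter_upwards [h1, ae_of_ae_map (hW.prodMk hU).aemeasurable h'] with ω e1 e2
    rw [← e1, e2, Kernel.prodMkRight_apply]
  · intro h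
    refine ⟨hW.comap_le, (condIndepFun_iff_condExp_inter_preimage_eq_mul hY hU).2 ?_⟩
    intro s t hs ht
    obtain ⟨φ, hφ, he⟩ := h s hs
    set mX : MeasurableSpace Ω :=
      MeasurableSpace.comap (fun ω => (A ω, fun i => V i ω)) inferInstance with hmX
    set mW : MeasurableSpace Ω :=
      MeasurableSpace.comap (fun ω => (A ω, subvec V J ω)) inferInstance with hmW
    have hXle : mX ≤ _ := hX.comap_le
    have hWle : mW ≤ _ := hW.comap_le
    have hWX : mW ≤ mX := by
      rw [hmX, ← comap_split A V J]
      exact (measurable_fst.comp (comap_measurable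
        (fun ω => ((A ω, subvec V J ω), subvec V (Set.univ \ J) ω)))).comap_le
    have hUX : Measurable[mX] (subvec V (Set.univ \ J)) := by
      rw [hmX, ← comap_split A V J]
      exact measurable_snd.comp (comap_measurable
        (fun ω => ((A ω, subvec V J ω), subvec V (Set.univ \ J) ω)))
    set g : Ω → ℝ := fun ω => φ (A ω, subvec V J ω) with hg
    set S : Ω → ℝ := (Y ⁻¹' s).indicator fun _ => 1 with hS
    set T : Ω → ℝ := (subvec V (Set.univ \ J) ⁻¹' t).indicator fun _ => 1 with hT
    have hgW : StronglyMeasurable[mW] g :=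
      (hφ.comp (comap_measurable fun ω => (A ω, subvec V J ω))).stronglyMeasurable
    have hSi : Integrable S μ := (integrable_const _).indicator (hY hs)
    have hTi : Integrable T μ := (integrable_const _).indicator (hU ht)
    have hTX : StronglyMeasurable[mX] T := stronglyMeasurable_const.indicator (hUX ht)
    have hTS : ∀ f : Ω → ℝ, T * f = (subvec V (Set.univ \ J) ⁻¹' t).indicator f := by
      intro f; funext ω; by_cases hω : ω ∈ subvec V (Set.univ \ J) ⁻¹' t <;> simp [hT, hω]
    have hprod : (Y ⁻¹' s ∩ subvec V (Set.univ \ J) ⁻¹' t).indicator (fun _ => (1 : ℝ)) = T * S := by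
      rw [hTS, hS, Set.indicator_indicator, Set.inter_comm]
    have hgi : Integrable g μ := (integrable_congr he).1 integrable_condExp
    -- By the tower property, `g` is also a version of `P(Y ∈ s | A, V_J)`.
    have e1 : μ[S | mW] =ᵐ[μ] g := by
      refine (condExp_condExp_of_le hWX hXle).symm.trans ((condExp_congr_ae he).trans ?_)
      rw [condExp_of_stronglyMeasurable hWle hgW hgi]
    have e2 : μ[T * S | mX] =ᵐ[μ] T * g := by
      refine (condExp_mul_of_stronglyMeasurable_left hTX ?_ hSi).trans
        (Filter.EventuallyEq.rfl.mul he)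
      rw [hTS]; exact hSi.indicator (hU ht)
    have e3 : μ[T * g | mW] =ᵐ[μ] μ[T | mW] * g := by
      refine condExp_mul_of_stronglyMeasurable_right hgW ?_ hTi
      rw [hTS]; exact hgi.indicator (hU ht)
    rw [hprod]
    have e4 := (condExp_condExp_of_le (f := T * S) hWX hXle).symm.trans
      ((condExp_congr_ae e2).trans e3)
    filter_upwards [e1, e4] with ω h1 h4
    rw [h4, h1, Pi.mul_apply, mul_comm]

/-- Replacing the coordinates outside `J` by independent copies preserves a product of
probability measures. -/
lemma measurePreserving_resample {I : Type*} [Fintype I] (ν : I → Measure ℝ)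
    [∀ i, IsProbabilityMeasure (ν i)] (J : Set I) [DecidablePred (· ∈ J)] :
    MeasurePreserving (fun p : (I → ℝ) × (I → ℝ) => fun i => if i ∈ J then p.2 i else p.1 i)
      ((Measure.pi ν).prod (Measure.pi ν)) (Measure.pi ν) := by
  have hm : Measurable
      (fun p : (I → ℝ) × (I → ℝ) => fun i => if i ∈ J then p.2 i else p.1 i) := by
    refine measurable_pi_lambda _ fun i => ?_
    by_cases h : i ∈ J
    · simp only [h, if_true]; fun_prop
    · simp only [h, if_false]; fun_prop
  refine ⟨hm, (Measure.pi_eq fun s hs => ?_).symm⟩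
  rw [Measure.map_apply hm (MeasurableSet.univ_pi hs)]
  have hpre : (fun p : (I → ℝ) × (I → ℝ) => fun i => if i ∈ J then p.2 i else p.1 i) ⁻¹'
      (Set.univ.pi s) = (Set.univ.pi fun i => if i ∈ J then Set.univ else s i) ×ˢ
        (Set.univ.pi fun i => if i ∈ J then s i else Set.univ) := by
    ext p
    simp only [Set.mem_preimage, Set.mem_univ_pi, Set.mem_prod, ← forall_and]
    refine forall_congr' fun i => ?_
    by_cases h : i ∈ J <;> simp [h]
  rw [hpre, Measure.prod_prod, Measure.pi_pi, Measure.pi_pi, ← Finset.prod_mul_distrib]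
  refine Finset.prod_congr rfl fun i _ => ?_
  by_cases h : i ∈ J <;> simp [h]

/-- Under a positive density, a random variable that is almost surely both a function of
`(A, V_J)` and a function of `(A, V_K)` is almost surely a function of `(A, V_{J ∩ K})`. -/
lemma exists_inter_version [Fintype I] (μ : Measure Ω) [IsProbabilityMeasure μ]
    {A : Ω → ℝ} {V : I → Ω → ℝ} (hA : Measurable A) (hV : ∀ i, Measurable (V i))
    (hpos : PositivePairDensity μ A V) {J K : Set I}
    {φ : ℝ × (J → ℝ) → ℝ} {ψ : ℝ × (K → ℝ) → ℝ} (hφ : Measurable φ) (hψ : Measurable ψ)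
    (h : ∀ᵐ ω ∂μ, φ (A ω, subvec V J ω) = ψ (A ω, subvec V K ω)) :
    ∃ χ : ℝ × ((J ∩ K : Set I) → ℝ) → ℝ, Measurable χ ∧
      ∀ᵐ ω ∂μ, ψ (A ω, subvec V K ω) = χ (A ω, subvec V (J ∩ K) ω) := by
  classical
  have hX : Measurable (fun ω => (A ω, fun i => V i ω)) := hA.prodMk (measurable_pi_lambda _ hV)
  have := Measure.isProbabilityMeasure_map (μ := μ) hA.aemeasurable
  have := fun i => Measure.isProbabilityMeasure_map (μ := μ) (hV i).aemeasurable
  obtain ⟨hac, hd⟩ := hpos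
  set ν := Measure.pi fun i => μ.map (V i) with hν
  have hac' : (μ.map A).prod ν ≪ μ.map (fun ω => (A ω, fun i => V i ω)) := by
    have := withDensity_absolutelyContinuous' (μ := (μ.map A).prod ν)
      (Measure.measurable_rnDeriv (μ.map (fun ω => (A ω, fun i => V i ω)))
        ((μ.map A).prod ν)).aemeasurable (hd.mono fun x hx => hx.ne')
    rwa [Measure.withDensity_rnDeriv_eq _ _ hac] at this
  have hprod : ∀ᵐ x ∂(μ.map A).prod ν,
      φ (x.1, fun j : J => x.2 j) = ψ (x.1, fun j : K => x.2 j) := by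
    refine hac'.ae_le ((ae_map_iff hX.aemeasurable ?_).2 h)
    exact measurableSet_eq_fun (hφ.comp (by fun_prop)) (hψ.comp (by fun_prop))
  -- Resample the coordinates outside `K`; `c` is the independent copy.
  have hmp : MeasurePreserving
      (fun q : ℝ × ((I → ℝ) × (I → ℝ)) => (q.1, fun i => if i ∈ K then q.2.2 i else q.2.1 i))
      ((μ.map A).prod (ν.prod ν)) ((μ.map A).prod ν) :=
    (MeasurePreserving.id _).prod (measurePreserving_resample _ K)
  have hswap : MeasurePreserving
      (fun q : (I → ℝ) × (ℝ × (I → ℝ)) => (q.2.1, (q.1, q.2.2)))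
      (ν.prod ((μ.map A).prod ν)) ((μ.map A).prod (ν.prod ν)) := by
    have h1 := (measurePreserving_prodAssoc ν (μ.map A) ν).symm MeasurableEquiv.prodAssoc
    have h2 := (Measure.measurePreserving_swap (μ := ν) (ν := μ.map A)).prod
      (MeasurePreserving.id ν)
    have h3 := measurePreserving_prodAssoc (μ.map A) ν ν
    exact h3.comp (h2.comp h1)
  have hre := (hmp.comp hswap).quasiMeasurePreserving.ae hprod
  obtain ⟨c, hc⟩ := (Measure.ae_ae_of_ae_prod hre).exists
  refine ⟨fun p => φ (p.1, fun j => if hj : (j : I) ∈ K then p.2 ⟨j, j.2, hj⟩ else c j), ?_, ?_⟩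
  · refine hφ.comp (Measurable.prodMk (by fun_prop) (measurable_pi_lambda _ fun j => ?_))
    by_cases hj : (j : I) ∈ K
    · simp only [hj, dite_true]; fun_prop
    · simp only [hj, dite_false]; fun_prop
  · filter_upwards [ae_of_ae_map hX.aemeasurable (hac.ae_le hc)] with ω hω
    simp only [Function.comp_apply] at hω
    convert hω.symm using 3
    · funext j; simp [subvec]
    · simp [subvec]

lemma IsOutBlanket.inter [StandardBorelSpace Ω] [Fintype I] {μ : Measure Ω}
    [IsProbabilityMeasure μ] {A Y : Ω → ℝ} {V : I → Ω → ℝ}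
    (hA : Measurable A) (hY : Measurable Y) (hV : ∀ i, Measurable (V i))
    (hpos : PositivePairDensity μ A V) {J K : Set I}
    (hJ : IsOutBlanket μ A Y V J) (hK : IsOutBlanket μ A Y V K) :
    IsOutBlanket μ A Y V (J ∩ K) := by
  rw [isOutBlanket_iff μ hA hY hV] at hJ hK ⊢
  intro B hB
  obtain ⟨φ, hφ, h1⟩ := hJ B hB
  obtain ⟨ψ, hψ, h2⟩ := hK B hB
  obtain ⟨χ, hχ, h3⟩ := exists_inter_version μ hA hV hpos hφ hψ (h1.symm.trans h2)
  exact ⟨χ, hχ, h2.trans h3⟩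

lemma isOutBlanket_univ [StandardBorelSpace Ω] [Fintype I] (μ : Measure Ω)
    [IsProbabilityMeasure μ] {A Y : Ω → ℝ} {V : I → Ω → ℝ}
    (hA : Measurable A) (hV : ∀ i, Measurable (V i)) :
    IsOutBlanket μ A Y V Set.univ := by
  refine ⟨(hA.prodMk (measurable_subvec hV _)).comap_le, ?_⟩
  -- The complement of `univ` is empty, so the complementary subvector is constant.
  have hc : subvec V (Set.univ \ Set.univ) = fun _ => fun j => absurd trivial j.2.2 := by
    funext ω j; exact absurd trivial j.2.2
  rw [hc]
  exact condIndepFun_const_right _ _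

end Blankets

/-- the outcome Markov boundary `R_{Y|A}(V)` is itself an outcome Markov blanket
(`R_{Y|A}(V) ∈ 𝔯_{Y|A}(V)`, i.e. `Y ⊥⊥ V_{I ∖ R_{Y|A}(V)} | (A, V_{R_{Y|A}(V)})`), and hence
the minimum element of `𝔯_{Y|A}(V)`. -/
theorem outBoundary_isBlanket
    {Ω I : Type*} [MeasurableSpace Ω] [StandardBorelSpace Ω] [Fintype I]
    (μ : Measure Ω) [IsProbabilityMeasure μ]
    (A Y : Ω → ℝ) (V : I → Ω → ℝ)
    (hA : Measurable A) (hY : Measurable Y) (hV : ∀ i, Measurable (V i))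
    (hpos : PositivePairDensity μ A V) :
    IsOutBlanket μ A Y V (outBoundary μ A Y V Set.univ) ∧
      ∀ J : Set I, IsOutBlanket μ A Y V J → outBoundary μ A Y V Set.univ ⊆ J := by
  have hsub : ∀ J : Set I, IsOutBlanket μ A Y V J → outBoundary μ A Y V Set.univ ⊆ J :=
    fun J hJ => Set.sInter_subset_of_mem ⟨Set.subset_univ J, hJ⟩
  refine ⟨?_, hsub⟩
  have hfin : {J' : Set I | J' ⊆ Set.univ ∧ IsOutBlanket μ A Y V J'}.Finite := Set.toFinite _
  change IsOutBlanket μ A Y V (⋂₀ {J' : Set I | J' ⊆ Set.univ ∧ IsOutBlanket μ A Y V J'})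
  refine Set.Finite.induction_on_subset
    (motive := fun s _ => IsOutBlanket μ A Y V (⋂₀ s)) _ hfin ?_ ?_
  · rw [Set.sInter_empty]
    exact isOutBlanket_univ μ hA hV
  · intro J s hJ _ _ ih
    rw [Set.sInter_insert]
    exact IsOutBlanket.inter hA hY hV hpos hJ.2 ih
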